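/- Let μ > 0 and λ > 0 be such that the supremum of E[U(X)] − μ·h(X) − λ·E[ρX] over X ∈ L⁰₊ is finite. If X* ∈ L⁰₊ maximizes E[U(X)] − μ·h(X) − λ·E[ρX] over X ∈ L⁰₊, then U′(X*) − λρ − μ·h′(X*) ≤ 0 a.s. -/

import Mathlib

/-!
For a measurable set `B` and `ε > 0`, compare the maximizer `X` with `Y = X + ε 1_B`. Concavity of
`U` gives `U(X + ε) - U(X) ≥ ε U'(X + ε)`. The elementary bounds `log x - log y ≥ (x - y) / x` and
`1 - e^{-t} ≥ t e^{-t}`, followed by Fubini, give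
`h(X) - h(Y) ≥ ε e^{-a₁ε} E[1_B (-h'(X))]` (`werm_gap`). Optimality of `X` therefore yields
`E[1_B (U'(X + ε) - μ e^{-a₁ε} h'(X))] ≤ E[1_B λρ]` for every `B`, that is,
`U'(X + ε) - μ e^{-a₁ε} h'(X) ≤ λρ` a.s. (`foc_eps`).

Now let `ε = 1/(n+1) → 0`. Where `X = 0` the left side tends to `∞` by the Inada condition at `0`,
which is impossible, so `X > 0` a.s.; where `X > 0`, continuity of `U'` gives the claim.
The argument is carried out for `X` nonnegative everywhere, and applied to `max X 0`.
-/

open MeasureTheory Filter Set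
open scoped ENNReal

noncomputable section

variable {Ω : Type*} [MeasurableSpace Ω]

/-- Entropic risk measure `h_a(X) = (1/a) log E[e^{-aX}]`. -/
def entropic (P : Measure Ω) (a : ℝ) (X : Ω → ℝ) : ℝ :=
  (1 / a) * Real.log (∫ ω, Real.exp (-a * X ω) ∂P)

/-- Weighted entropic risk measure `h(X) = ∫_{[a₀,a₁]} h_a(X) m(da)`. -/
def werm (P : Measure Ω) (m : Measure ℝ) (a₀ a₁ : ℝ) (X : Ω → ℝ) : ℝ :=
  ∫ a in Set.Icc a₀ a₁, entropic P a X ∂m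

/-- Marginal risk density transform `h′(X) = -∫_{[a₀,a₁]} e^{-aX}/E[e^{-aX}] m(da)`. -/
def hprime (P : Measure Ω) (m : Measure ℝ) (a₀ a₁ : ℝ) (X : Ω → ℝ) (ω : Ω) : ℝ :=
  -∫ a in Set.Icc a₀ a₁, Real.exp (-a * X ω) / (∫ ω', Real.exp (-a * X ω') ∂P) ∂m

/-- Extended-real-valued expectation `E[f] = ∫ f⁺ - ∫ f⁻ ∈ [-∞,∞]`. -/
def eint (P : Measure Ω) (f : Ω → ℝ) : EReal :=
  ((∫⁻ ω, ENNReal.ofReal (f ω) ∂P : ℝ≥0∞) : EReal)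
    - ((∫⁻ ω, ENNReal.ofReal (-(f ω)) ∂P : ℝ≥0∞) : EReal)

/-- `E[ρX] ∈ [0,∞]` for a nonnegative payoff. -/
def budget (P : Measure Ω) (ρ X : Ω → ℝ) : ℝ≥0∞ := ∫⁻ ω, ENNReal.ofReal (ρ ω * X ω) ∂P

/-- `X ∈ L⁰₊`: a nonnegative random variable. -/
def Lpos (P : Measure Ω) (X : Ω → ℝ) : Prop := Measurable X ∧ ∀ᵐ ω ∂P, 0 ≤ X ω

/-- Objective of the Lagrangian risk-minimization problem: `h(X) + λ E[ρX]`. -/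
def robj (P : Measure Ω) (m : Measure ℝ) (a₀ a₁ : ℝ) (ρ : Ω → ℝ) (lam : ℝ) (X : Ω → ℝ) : EReal :=
  ((werm P m a₀ a₁ X : ℝ) : EReal) + (lam : EReal) * ((budget P ρ X : ℝ≥0∞) : EReal)

/-- `ψ_X(y) = ∫_{[a₀,a₁]} e^{-ay} / E[e^{-aX}] m(da)`. -/
def psi (P : Measure Ω) (m : Measure ℝ) (a₀ a₁ : ℝ) (X : Ω → ℝ) (y : ℝ) : ℝ :=
  ∫ a in Set.Icc a₀ a₁, Real.exp (-a * y) / (∫ ω, Real.exp (-a * X ω) ∂P) ∂m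

/-- Inverse of `ψ_X` on `(0,∞)` (realized via `sSup`, since `ψ_X` is continuous, strictly
decreasing with limits `∞` at `-∞` and `0` at `∞`). -/
def psiInv (P : Measure Ω) (m : Measure ℝ) (a₀ a₁ : ℝ) (X : Ω → ℝ) (z : ℝ) : ℝ :=
  sSup {y : ℝ | z ≤ psi P m a₀ a₁ X y}

/-- The transform `𝐓X = max(ψ_X⁻¹(λρ), 0)`. -/
def Ttrans (P : Measure Ω) (m : Measure ℝ) (a₀ a₁ lam : ℝ) (ρ : Ω → ℝ) (X : Ω → ℝ) : Ω → ℝ :=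
  fun ω => max (psiInv P m a₀ a₁ X (lam * ρ ω)) 0

/-- `X ∈ 𝒳(x)`: nonnegative and `E[ρX] ≤ x`. -/
def feasible (P : Measure Ω) (ρ : Ω → ℝ) (x : ℝ) (X : Ω → ℝ) : Prop :=
  Lpos P X ∧ budget P ρ X ≤ ENNReal.ofReal x

/-- `γ₁(x)`: the minimal value of `h` over `𝒳(x)`. -/
def gamma1 (P : Measure Ω) (m : Measure ℝ) (a₀ a₁ : ℝ) (ρ : Ω → ℝ) (x : ℝ) : ℝ :=
  sInf (werm P m a₀ a₁ '' {X | feasible P ρ x X})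

/-- Expected utility `E[U(X)] ∈ [-∞,∞]`. -/
def eutil (P : Measure Ω) (U : ℝ → ℝ) (X : Ω → ℝ) : EReal := eint P (fun ω => U (X ω))

/-- Full Lagrangian objective `E[U(X)] - μ h(X) - λ E[ρX]`. -/
def fullObj (P : Measure Ω) (m : Measure ℝ) (a₀ a₁ : ℝ) (ρ : Ω → ℝ) (U : ℝ → ℝ)
    (μ lam : ℝ) (X : Ω → ℝ) : EReal :=
  eutil P U X - ((μ * werm P m a₀ a₁ X : ℝ) : EReal)
    - (lam : EReal) * ((budget P ρ X : ℝ≥0∞) : EReal)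

/-! ### Extended expectations -/

theorem eint_mono (P : Measure Ω) {f g : Ω → ℝ} (h : ∀ ω, f ω ≤ g ω) : eint P f ≤ eint P g := by
  unfold eint
  refine EReal.sub_le_sub ?_ ?_
  · exact EReal.coe_ennreal_le_coe_ennreal_iff.2
      (lintegral_mono fun ω => ENNReal.ofReal_le_ofReal (h ω))
  · exact EReal.coe_ennreal_le_coe_ennreal_iff.2
      (lintegral_mono fun ω => ENNReal.ofReal_le_ofReal (neg_le_neg (h ω)))

theorem eint_of_integrable (P : Measure Ω) {f : Ω → ℝ} (hf : Integrable f P) :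
    eint P f = ((∫ ω, f ω ∂P : ℝ) : EReal) := by
  have hn : (∫⁻ ω, ENNReal.ofReal (-(f ω)) ∂P) ≠ ⊤ := hf.neg.lintegral_lt_top.ne
  unfold eint
  rw [integral_eq_lintegral_pos_part_sub_lintegral_neg_part hf, EReal.coe_sub,
    EReal.coe_ennreal_toReal hf.lintegral_lt_top.ne,
    EReal.coe_ennreal_toReal hn]

/-- A finite extended expectation forces integrability, because `⊤ - ⊤ = ⊥` in `EReal`. -/
theorem integrable_of_eint (P : Measure Ω) {f : Ω → ℝ} (hf : AEStronglyMeasurable f P)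
    (h1 : eint P f ≠ ⊤) (h2 : eint P f ≠ ⊥) : Integrable f P := by
  unfold eint at h1 h2
  have hn : (∫⁻ ω, ENNReal.ofReal (-(f ω)) ∂P) ≠ ⊤ := by
    intro h
    rw [h] at h2
    simp at h2
  have hp : (∫⁻ ω, ENNReal.ofReal (f ω) ∂P) ≠ ⊤ := by
    intro h
    rw [h] at h1
    refine h1 (EReal.top_sub ?_)
    simpa using hn
  refine ⟨hf, ?_⟩
  rw [hasFiniteIntegral_iff_enorm]
  have : ∀ ω, ‖f ω‖ₑ = ENNReal.ofReal (f ω) + ENNReal.ofReal (-(f ω)) := by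
    intro ω
    rw [Real.enorm_eq_ofReal_abs]
    rcases le_total 0 (f ω) with h | h
    · rw [abs_of_nonneg h, ENNReal.ofReal_of_nonpos (neg_nonpos.2 h), add_zero]
    · rw [abs_of_nonpos h, ENNReal.ofReal_of_nonpos h, zero_add]
  simp_rw [this]
  rw [lintegral_add_left' hf.aemeasurable.ennreal_ofReal]
  exact ENNReal.add_lt_top.2 ⟨hp.lt_top, hn.lt_top⟩

/-! ### The weighted entropic risk measure -/

theorem integrable_exp_neg (P : Measure Ω) [IsProbabilityMeasure P] {X : Ω → ℝ}
    (hXm : Measurable X) (hX0 : ∀ ω, 0 ≤ X ω) {a : ℝ} (ha : 0 ≤ a) :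
    Integrable (fun ω => Real.exp (-a * X ω)) P := by
  refine Integrable.of_bound (by fun_prop) 1 (Eventually.of_forall fun ω => ?_)
  rw [Real.norm_of_nonneg (Real.exp_pos _).le]
  exact Real.exp_le_one_iff.2 (by nlinarith [mul_nonneg ha (hX0 ω)])

theorem laplace_pos (P : Measure Ω) [IsProbabilityMeasure P] {X : Ω → ℝ}
    (hXm : Measurable X) (hX0 : ∀ ω, 0 ≤ X ω) {a : ℝ} (ha : 0 ≤ a) :
    0 < ∫ ω, Real.exp (-a * X ω) ∂P :=
  integral_exp_pos (integrable_exp_neg P hXm hX0 ha)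

theorem laplace_anti (P : Measure Ω) [IsProbabilityMeasure P] {X : Ω → ℝ}
    (hXm : Measurable X) (hX0 : ∀ ω, 0 ≤ X ω) {a b : ℝ} (ha : 0 ≤ a) (hab : a ≤ b) :
    ∫ ω, Real.exp (-b * X ω) ∂P ≤ ∫ ω, Real.exp (-a * X ω) ∂P := by
  refine integral_mono (integrable_exp_neg P hXm hX0 (ha.trans hab))
    (integrable_exp_neg P hXm hX0 ha) fun ω => ?_
  exact Real.exp_le_exp.2 (by nlinarith [mul_le_mul_of_nonneg_right hab (hX0 ω)])

theorem laplace_le_one (P : Measure Ω) [IsProbabilityMeasure P] {X : Ω → ℝ}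
    (hXm : Measurable X) (hX0 : ∀ ω, 0 ≤ X ω) {a : ℝ} (ha : 0 ≤ a) :
    ∫ ω, Real.exp (-a * X ω) ∂P ≤ 1 := by
  have := laplace_anti P hXm hX0 le_rfl ha
  simpa using this

theorem measurable_laplace (P : Measure Ω) [IsProbabilityMeasure P] {X : Ω → ℝ}
    (hXm : Measurable X) : Measurable fun a : ℝ => ∫ ω, Real.exp (-a * X ω) ∂P := by
  have : StronglyMeasurable (Function.uncurry fun (a : ℝ) (ω : Ω) => Real.exp (-a * X ω)) := by
    apply Measurable.stronglyMeasurable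
    unfold Function.uncurry
    fun_prop
  exact this.integral_prod_right.measurable

theorem integrable_entropic (P : Measure Ω) [IsProbabilityMeasure P] (m : Measure ℝ)
    [IsProbabilityMeasure m] {a₀ a₁ : ℝ} (ha₀ : 0 < a₀) {X : Ω → ℝ}
    (hXm : Measurable X) (hX0 : ∀ ω, 0 ≤ X ω) :
    IntegrableOn (fun a => entropic P a X) (Icc a₀ a₁) m := by
  have hmeas : Measurable fun a => entropic P a X := by
    unfold entropic
    exact (by fun_prop : Measurable fun a : ℝ => 1 / a).mul (measurable_laplace P hXm).log
  refine Integrable.of_bound hmeas.aestronglyMeasurable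
    (1 / a₀ * -Real.log (∫ ω, Real.exp (-a₁ * X ω) ∂P)) ?_
  refine (ae_restrict_iff' measurableSet_Icc).2 (Eventually.of_forall fun a ha => ?_)
  have ha' : 0 < a := ha₀.trans_le ha.1
  have h1 := Real.log_nonpos (laplace_pos P hXm hX0 ha'.le).le (laplace_le_one P hXm hX0 ha'.le)
  have h2 := Real.log_le_log (laplace_pos P hXm hX0 (ha'.le.trans ha.2))
    (laplace_anti P hXm hX0 ha'.le ha.2)
  unfold entropic
  rw [norm_mul, Real.norm_of_nonneg (by positivity), Real.norm_of_nonpos h1]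
  exact mul_le_mul (one_div_le_one_div_of_le ha₀ ha.1) (by linarith) (by linarith) (by positivity)

/-- The density `e^{-aX(ω)} / E[e^{-aX}]` is jointly integrable in `(ω, a)`, being bounded by
`1 / E[e^{-a₁X}]`. -/
theorem integrable_density (P : Measure Ω) [IsProbabilityMeasure P] (m : Measure ℝ)
    [IsProbabilityMeasure m] {a₀ a₁ : ℝ} (ha₀ : 0 < a₀) {X : Ω → ℝ}
    (hXm : Measurable X) (hX0 : ∀ ω, 0 ≤ X ω) (B : Set Ω) :
    Integrable (fun p : Ω × ℝ => Real.exp (-p.2 * X p.1) / ∫ ω', Real.exp (-p.2 * X ω') ∂P)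
      ((P.restrict B).prod (m.restrict (Icc a₀ a₁))) := by
  have hmeas : Measurable
      (fun p : Ω × ℝ => Real.exp (-p.2 * X p.1) / ∫ ω', Real.exp (-p.2 * X ω') ∂P) :=
    Measurable.div (by fun_prop) ((measurable_laplace P hXm).comp measurable_snd)
  have hIcc : ∀ᵐ p ∂((P.restrict B).prod (m.restrict (Icc a₀ a₁))), p.2 ∈ Icc a₀ a₁ :=
    Measure.quasiMeasurePreserving_snd.ae (ae_restrict_mem measurableSet_Icc)
  refine Integrable.of_bound hmeas.aestronglyMeasurable
    (1 / ∫ ω, Real.exp (-a₁ * X ω) ∂P) ?_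
  filter_upwards [hIcc] with p hp
  have ha' : 0 < p.2 := ha₀.trans_le hp.1
  have hp0 := laplace_pos P hXm hX0 ha'.le
  rw [Real.norm_of_nonneg (by positivity)]
  refine div_le_div₀ zero_le_one (Real.exp_le_one_iff.2 ?_)
    (laplace_pos P hXm hX0 (ha'.le.trans hp.2)) (laplace_anti P hXm hX0 ha'.le hp.2)
  nlinarith [mul_nonneg ha'.le (hX0 p.1)]

theorem integrable_hprime (P : Measure Ω) [IsProbabilityMeasure P] (m : Measure ℝ)
    [IsProbabilityMeasure m] {a₀ a₁ : ℝ} (ha₀ : 0 < a₀) {X : Ω → ℝ}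
    (hXm : Measurable X) (hX0 : ∀ ω, 0 ≤ X ω) :
    Integrable (hprime P m a₀ a₁ X) P := by
  have h := integrable_density P m (a₁ := a₁) ha₀ hXm hX0 univ
  rw [Measure.restrict_univ] at h
  exact h.integral_prod_left.neg

/-- The bound for a fixed risk aversion `a` underlying `werm_gap`. -/
theorem entropic_gap (P : Measure Ω) [IsProbabilityMeasure P] {a a₁ : ℝ} (ha : 0 < a)
    (haa : a ≤ a₁) {X : Ω → ℝ} (hXm : Measurable X) (hX0 : ∀ ω, 0 ≤ X ω) {ε : ℝ} (hε : 0 < ε)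
    {B : Set Ω} (hB : MeasurableSet B) :
    ε * Real.exp (-a₁ * ε) *
        (∫ ω in B, Real.exp (-a * X ω) / (∫ ω', Real.exp (-a * X ω') ∂P) ∂P)
      ≤ entropic P a X - entropic P a (fun ω => X ω + B.indicator (fun _ => ε) ω) := by
  have hYm : Measurable fun ω => X ω + B.indicator (fun _ => ε) ω :=
    hXm.add (measurable_const.indicator hB)
  have hY0 : ∀ ω, 0 ≤ X ω + B.indicator (fun _ => ε) ω := fun ω =>
    add_nonneg (hX0 ω) (indicator_nonneg (fun _ _ => hε.le) ω)
  have hMX := laplace_pos P hXm hX0 ha.le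
  have hMY := laplace_pos P hYm hY0 ha.le
  have iX := integrable_exp_neg P hXm hX0 ha.le
  have iY := integrable_exp_neg P hYm hY0 ha.le
  rw [integral_div]
  unfold entropic
  set x := ∫ ω, Real.exp (-a * X ω) ∂P with hx
  set y := ∫ ω, Real.exp (-a * (X ω + B.indicator (fun _ => ε) ω)) ∂P with hy
  set I := ∫ ω in B, Real.exp (-a * X ω) ∂P with hI
  have hdiff : a * (ε * Real.exp (-a₁ * ε)) * I ≤ x - y := by
    rw [hx, hy, hI, ← integral_sub iX iY, ← integral_const_mul, ← integral_indicator hB]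
    refine integral_mono ((iX.const_mul _).indicator hB) (iX.sub iY) fun ω => ?_
    by_cases hω : ω ∈ B
    · simp only [indicator_of_mem hω]
      have e1 : Real.exp (-a * (X ω + ε)) = Real.exp (-a * X ω) * Real.exp (-(a * ε)) := by
        rw [← Real.exp_add]; ring_nf
      rw [e1]
      have e2 : Real.exp (-a₁ * ε) ≤ Real.exp (-(a * ε)) :=
        Real.exp_le_exp.2 (by nlinarith)
      -- `1 - e^{-t} ≥ t e^{-t}` is `e^t ≥ 1 + t` multiplied by `e^{-t}`
      have e3 : a * ε * Real.exp (-(a * ε)) ≤ 1 - Real.exp (-(a * ε)) := by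
        have h1 := Real.add_one_le_exp (a * ε)
        have h2 : Real.exp (a * ε) * Real.exp (-(a * ε)) = 1 := by
          rw [← Real.exp_add]; simp
        nlinarith [Real.exp_pos (-(a * ε))]
      have e4 : a * ε * Real.exp (-a₁ * ε) ≤ 1 - Real.exp (-(a * ε)) :=
        (mul_le_mul_of_nonneg_left e2 (by positivity)).trans e3
      nlinarith [Real.exp_pos (-a * X ω)]
    · simp [indicator_of_notMem hω]
  have hlog : (x - y) / x ≤ Real.log x - Real.log y := by
    have h1 := Real.log_le_sub_one_of_pos (div_pos hMY hMX)
    rw [Real.log_div hMY.ne' hMX.ne'] at h1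
    have h2 : (x - y) / x = 1 - y / x := by field_simp
    linarith
  rw [← mul_sub]
  calc ε * Real.exp (-a₁ * ε) * (I / x)
      = 1 / a * (a * (ε * Real.exp (-a₁ * ε)) * I / x) := by field_simp
    _ ≤ 1 / a * ((x - y) / x) := by gcongr
    _ ≤ _ := by gcongr

/-- Adding `ε` on `B` lowers the risk at least at the marginal rate `-h'(X)`, up to the factor
`e^{-a₁ε}`. -/
theorem werm_gap (P : Measure Ω) [IsProbabilityMeasure P] (m : Measure ℝ)
    [IsProbabilityMeasure m] {a₀ a₁ : ℝ} (ha₀ : 0 < a₀) {X : Ω → ℝ}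
    (hXm : Measurable X) (hX0 : ∀ ω, 0 ≤ X ω) {ε : ℝ} (hε : 0 < ε)
    {B : Set Ω} (hB : MeasurableSet B) :
    ε * Real.exp (-a₁ * ε) * (∫ ω in B, -hprime P m a₀ a₁ X ω ∂P)
      ≤ werm P m a₀ a₁ X - werm P m a₀ a₁ (fun ω => X ω + B.indicator (fun _ => ε) ω) := by
  have hYm : Measurable fun ω => X ω + B.indicator (fun _ => ε) ω :=
    hXm.add (measurable_const.indicator hB)
  have hY0 : ∀ ω, 0 ≤ X ω + B.indicator (fun _ => ε) ω := fun ω =>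
    add_nonneg (hX0 ω) (indicator_nonneg (fun _ _ => hε.le) ω)
  have hd := integrable_density P m (a₁ := a₁) ha₀ hXm hX0 B
  unfold werm hprime
  rw [← integral_sub (integrable_entropic P m ha₀ hXm hX0) (integrable_entropic P m ha₀ hYm hY0)]
  simp only [neg_neg]
  rw [integral_integral_swap hd, ← integral_const_mul]
  refine setIntegral_mono_on (hd.integral_prod_right.const_mul _)
    ((integrable_entropic P m ha₀ hXm hX0).sub (integrable_entropic P m ha₀ hYm hY0))
    measurableSet_Icc fun a ha => ?_
  exact entropic_gap P (ha₀.trans_le ha.1) ha.2 hXm hX0 hε hB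

/-! ### The utility function -/

theorem marginal_antitone {U U' : ℝ → ℝ} (hUd : ∀ y : ℝ, 0 < y → HasDerivAt U (U' y) y)
    (hUconc : StrictConcaveOn ℝ (Ioi 0) U) : AntitoneOn U' (Ioi 0) := by
  have h := hUconc.concaveOn.antitoneOn_derivWithin
    fun y hy => (hUd y hy).differentiableAt.differentiableWithinAt
  intro x hx y hy hxy
  have := h hx hy hxy
  rwa [(hUd x hx).hasDerivWithinAt.derivWithin (uniqueDiffOn_Ioi 0 x hx),
    (hUd y hy).hasDerivWithinAt.derivWithin (uniqueDiffOn_Ioi 0 y hy)] at this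

theorem marginal_nonneg {U' : ℝ → ℝ} (hanti : AntitoneOn U' (Ioi 0))
    (hInadaInf : Tendsto U' atTop (nhds 0)) {y : ℝ} (hy : 0 < y) : 0 ≤ U' y := by
  refine le_of_tendsto hInadaInf ?_
  filter_upwards [eventually_ge_atTop y] with z hz
  exact hanti hy (hy.trans_le hz) hz

theorem utility_gap {U U' : ℝ → ℝ} (hUc : ContinuousOn U (Ici 0))
    (hUd : ∀ y : ℝ, 0 < y → HasDerivAt U (U' y) y) (hanti : AntitoneOn U' (Ioi 0))
    {x ε : ℝ} (hx : 0 ≤ x) (hε : 0 < ε) : U x + ε * U' (x + ε) ≤ U (x + ε) := by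
  obtain ⟨c, hc, h⟩ := exists_hasDerivAt_eq_slope U U' (by linarith : x < x + ε)
    (hUc.mono fun y hy => hx.trans hy.1) fun y hy => hUd y (hx.trans_lt hy.1)
  have hc' : U' (x + ε) ≤ U' c :=
    hanti (mem_Ioi.2 (hx.trans_lt hc.1)) (mem_Ioi.2 (by linarith)) hc.2.le
  rw [h, add_sub_cancel_left, le_div_iff₀ hε] at hc'
  linarith

/-! ### First-order condition -/

/-- A finite value of the objective forces `U(X)` and `ρX` to be integrable. -/
theorem integrable_of_fullObj (P : Measure Ω) (m : Measure ℝ) {a₀ a₁ : ℝ} {ρ : Ω → ℝ}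
    (hmρ : Measurable ρ) (hρ0 : ∀ᵐ ω ∂P, 0 < ρ ω) {U : ℝ → ℝ}
    (hUc : ContinuousOn U (Ici 0)) {μ lam : ℝ} (hlam : 0 < lam) {X : Ω → ℝ}
    (hXm : Measurable X) (hX0 : ∀ ω, 0 ≤ X ω)
    {r : ℝ} (hr : fullObj P m a₀ a₁ ρ U μ lam X = (r : EReal)) :
    Integrable (fun ω => U (X ω)) P ∧ Integrable (fun ω => ρ ω * X ω) P := by
  have hUX : Measurable fun ω => U (X ω) :=
    (continuousOn_iff_continuous_domRestrict.1 hUc).measurable.comp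
      (hXm.subtype_mk (h := hX0))
  unfold fullObj eutil at hr
  have hb : budget P ρ X ≠ ⊤ := by
    intro h
    rw [h, EReal.coe_ennreal_top, EReal.coe_mul_top_of_pos hlam, EReal.sub_top] at hr
    exact EReal.bot_ne_coe r hr
  have hbr : (lam : EReal) * ((budget P ρ X : ℝ≥0∞) : EReal)
      = ((lam * (budget P ρ X).toReal : ℝ) : EReal) := by
    rw [EReal.coe_mul, EReal.coe_ennreal_toReal hb]
  rw [hbr] at hr
  constructor
  · refine integrable_of_eint P hUX.aestronglyMeasurable (fun h => ?_) (fun h => ?_)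
    · rw [h, EReal.top_sub_coe, EReal.top_sub_coe] at hr
      exact EReal.top_ne_coe r hr
    · rw [h, EReal.bot_sub, EReal.bot_sub] at hr
      exact EReal.bot_ne_coe r hr
  · refine ⟨(hmρ.mul hXm).aestronglyMeasurable, ?_⟩
    rw [hasFiniteIntegral_iff_ofReal]
    · exact lt_top_iff_ne_top.2 hb
    · filter_upwards [hρ0] with ω h using mul_nonneg h.le (hX0 ω)

theorem coe_budget (P : Measure Ω) {ρ X : Ω → ℝ} (hρ0 : ∀ᵐ ω ∂P, 0 < ρ ω)
    (hX0 : ∀ ω, 0 ≤ X ω) (hi : Integrable (fun ω => ρ ω * X ω) P) (lam : ℝ) :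
    (lam : EReal) * ((budget P ρ X : ℝ≥0∞) : EReal)
      = ((lam * ∫ ω, ρ ω * X ω ∂P : ℝ) : EReal) := by
  have h0 : 0 ≤ᵐ[P] fun ω => ρ ω * X ω := by
    filter_upwards [hρ0] with ω h using mul_nonneg h.le (hX0 ω)
  unfold budget
  rw [← ofReal_integral_eq_lintegral_ofReal hi h0, EReal.coe_ennreal_ofReal,
    max_eq_left (integral_nonneg_of_ae h0), EReal.coe_mul]

/-- The discretized first-order condition. At points where `X = 0` it still only involves `U'`
at the positive number `ε`. -/
theorem foc_eps (P : Measure Ω) [IsProbabilityMeasure P]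
    {a₀ a₁ : ℝ} (ha₀ : 0 < a₀) (m : Measure ℝ) [IsProbabilityMeasure m]
    {ρ : Ω → ℝ} (hmρ : Measurable ρ) (hρ0 : ∀ᵐ ω ∂P, 0 < ρ ω) (hρint : Integrable ρ P)
    {U U' : ℝ → ℝ} (hUc : ContinuousOn U (Ici 0))
    (hUd : ∀ y : ℝ, 0 < y → HasDerivAt U (U' y) y)
    (hU'c : ContinuousOn U' (Ioi 0)) (hanti : AntitoneOn U' (Ioi 0))
    (hInadaInf : Tendsto U' atTop (nhds 0))
    {μ lam : ℝ} (hμ : 0 < μ) (hlam : 0 < lam)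
    {X : Ω → ℝ} (hXm : Measurable X) (hX0 : ∀ ω, 0 ≤ X ω)
    {r : ℝ} (hr : fullObj P m a₀ a₁ ρ U μ lam X = (r : EReal))
    (hXmax : ∀ Y, Lpos P Y → fullObj P m a₀ a₁ ρ U μ lam Y ≤ fullObj P m a₀ a₁ ρ U μ lam X)
    {ε : ℝ} (hε : 0 < ε) :
    ∀ᵐ ω ∂P, U' (X ω + ε) + μ * Real.exp (-a₁ * ε) * (-hprime P m a₀ a₁ X ω) ≤ lam * ρ ω := by
  obtain ⟨iU, iρX⟩ := integrable_of_fullObj P m hmρ hρ0 hUc hlam hXm hX0 hr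
  have hpos : ∀ ω, 0 < X ω + ε := fun ω => by linarith [hX0 ω]
  have iU' : Integrable (fun ω => U' (X ω + ε)) P := by
    have hm : Measurable fun ω => U' (X ω + ε) :=
      (continuousOn_iff_continuous_domRestrict.1 hU'c).measurable.comp
        ((hXm.add_const ε).subtype_mk (h := hpos))
    refine Integrable.of_bound hm.aestronglyMeasurable (U' ε) (Eventually.of_forall fun ω => ?_)
    rw [Real.norm_of_nonneg (marginal_nonneg hanti hInadaInf (hpos ω))]
    exact hanti (mem_Ioi.2 hε) (hpos ω) (by linarith [hX0 ω])
  have iH := (integrable_hprime P m (a₁ := a₁) ha₀ hXm hX0).neg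
  refine ae_le_of_forall_setIntegral_le (iU'.add (iH.const_mul _)) (hρint.const_mul lam)
    fun B hB _ => ?_
  have hY0 : ∀ ω, 0 ≤ X ω + B.indicator (fun _ => ε) ω := fun ω =>
    add_nonneg (hX0 ω) (indicator_nonneg (fun _ _ => hε.le) ω)
  have hYm : Measurable fun ω => X ω + B.indicator (fun _ => ε) ω :=
    hXm.add (measurable_const.indicator hB)
  have hmax := hXmax (fun ω => X ω + B.indicator (fun _ => ε) ω)
    ⟨hYm, Eventually.of_forall hY0⟩
  have hgap := werm_gap P m (a₁ := a₁) ha₀ hXm hX0 hε hB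
  have hρY : (fun ω => ρ ω * (X ω + B.indicator (fun _ => ε) ω))
      = fun ω => ρ ω * X ω + B.indicator (fun ω => ε * ρ ω) ω := by
    funext ω
    by_cases hω : ω ∈ B
    · simp only [indicator_of_mem hω]; ring
    · simp only [indicator_of_notMem hω]; ring
  have iρB : Integrable (B.indicator fun ω => ε * ρ ω) P := (hρint.const_mul ε).indicator hB
  have iρY : Integrable (fun ω => ρ ω * (X ω + B.indicator (fun _ => ε) ω)) P := by
    rw [hρY]; exact iρX.add iρB
  have eρY : ∫ ω, ρ ω * (X ω + B.indicator (fun _ => ε) ω) ∂P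
      = (∫ ω, ρ ω * X ω ∂P) + ε * ∫ ω in B, ρ ω ∂P := by
    rw [hρY, integral_add iρX iρB, integral_indicator hB, integral_const_mul]
  -- an integrable minorant of `U(Y)`; integrability of `U(Y)` itself is not needed
  have iB : Integrable (B.indicator fun ω => ε * U' (X ω + ε)) P := (iU'.const_mul ε).indicator hB
  have hUY : (((∫ ω, U (X ω) ∂P) + ε * ∫ ω in B, U' (X ω + ε) ∂P : ℝ) : EReal)
      ≤ eutil P U (fun ω => X ω + B.indicator (fun _ => ε) ω) := by
    rw [← integral_const_mul, ← integral_indicator hB, ← integral_add iU iB]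
    refine (eint_of_integrable P (iU.add iB)).ge.trans (eint_mono P fun ω => ?_)
    by_cases hω : ω ∈ B
    · simp only [indicator_of_mem hω, Pi.add_apply]
      exact utility_gap hUc hUd hanti (hX0 ω) hε
    · simp [indicator_of_notMem hω]
  unfold fullObj at hmax
  rw [coe_budget P hρ0 hX0 iρX, coe_budget P hρ0 hY0 iρY, eρY] at hmax
  have hmax2 := (EReal.sub_le_sub (EReal.sub_le_sub hUY le_rfl) le_rfl).trans hmax
  unfold eutil at hmax2
  rw [eint_of_integrable P iU] at hmax2
  norm_cast at hmax2
  have e1 : ∫ ω in B, (U' (X ω + ε) + μ * Real.exp (-a₁ * ε) * (-hprime P m a₀ a₁ X ω)) ∂P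
      = (∫ ω in B, U' (X ω + ε) ∂P)
        + μ * Real.exp (-a₁ * ε) * ∫ ω in B, -hprime P m a₀ a₁ X ω ∂P := by
    rw [← integral_const_mul]
    exact integral_add iU'.integrableOn (iH.const_mul _).integrableOn
  refine e1.trans_le ?_
  rw [integral_const_mul]
  have h3 := mul_le_mul_of_nonneg_left hgap hμ.le
  refine le_of_mul_le_mul_left ?_ hε
  linarith

/-- The first-order condition for a maximizer that is nonnegative everywhere. -/
theorem foc_of_nonneg (P : Measure Ω) [IsProbabilityMeasure P]
    {a₀ a₁ : ℝ} (ha₀ : 0 < a₀) (m : Measure ℝ) [IsProbabilityMeasure m]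
    {ρ : Ω → ℝ} (hmρ : Measurable ρ) (hρ0 : ∀ᵐ ω ∂P, 0 < ρ ω) (hρint : Integrable ρ P)
    {U U' : ℝ → ℝ} (hUc : ContinuousOn U (Ici 0))
    (hUd : ∀ y : ℝ, 0 < y → HasDerivAt U (U' y) y)
    (hU'c : ContinuousOn U' (Ioi 0)) (hanti : AntitoneOn U' (Ioi 0))
    (hInada0 : Tendsto U' (nhdsWithin 0 (Ioi 0)) atTop)
    (hInadaInf : Tendsto U' atTop (nhds 0))
    {μ lam : ℝ} (hμ : 0 < μ) (hlam : 0 < lam)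
    {X : Ω → ℝ} (hXm : Measurable X) (hX0 : ∀ ω, 0 ≤ X ω)
    {r : ℝ} (hr : fullObj P m a₀ a₁ ρ U μ lam X = (r : EReal))
    (hXmax : ∀ Y, Lpos P Y → fullObj P m a₀ a₁ ρ U μ lam Y ≤ fullObj P m a₀ a₁ ρ U μ lam X) :
    ∀ᵐ ω ∂P, U' (X ω) - lam * ρ ω - μ * hprime P m a₀ a₁ X ω ≤ 0 := by
  have hall : ∀ᵐ ω ∂P, ∀ n : ℕ, U' (X ω + 1 / ((n : ℝ) + 1))
      + μ * Real.exp (-a₁ * (1 / ((n : ℝ) + 1))) * (-hprime P m a₀ a₁ X ω) ≤ lam * ρ ω :=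
    ae_all_iff.2 fun n => foc_eps P ha₀ m hmρ hρ0 hρint hUc hUd hU'c hanti hInadaInf hμ hlam
      hXm hX0 hr hXmax (by positivity)
  have hlim : Tendsto (fun n : ℕ => 1 / ((n : ℝ) + 1)) atTop (nhds 0) :=
    tendsto_one_div_add_atTop_nhds_zero_nat
  filter_upwards [hall] with ω hω
  have hH : 0 ≤ -hprime P m a₀ a₁ X ω := by
    unfold hprime
    rw [neg_neg]
    exact integral_nonneg fun a =>
      div_nonneg (Real.exp_pos _).le (integral_nonneg fun _ => (Real.exp_pos _).le)
  rcases (hX0 ω).eq_or_lt with h0 | h0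
  · -- `X ω = 0` contradicts the Inada condition at `0`
    exfalso
    have ht : Tendsto (fun n : ℕ => U' (1 / ((n : ℝ) + 1))) atTop atTop :=
      hInada0.comp (tendsto_nhdsWithin_iff.2
        ⟨hlim, Eventually.of_forall fun n => mem_Ioi.2 (by positivity)⟩)
    obtain ⟨n, hn⟩ := (ht.eventually_gt_atTop (lam * ρ ω)).exists
    have := hω n
    rw [← h0, zero_add] at this
    have h2 : 0 ≤ μ * Real.exp (-a₁ * (1 / ((n : ℝ) + 1))) * (-hprime P m a₀ a₁ X ω) := by
      positivity
    linarith
  · have hc : ContinuousAt U' (X ω) := hU'c.continuousAt (Ioi_mem_nhds h0)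
    have t1 : Tendsto (fun n : ℕ => X ω + 1 / ((n : ℝ) + 1)) atTop (nhds (X ω)) := by
      simpa using hlim.const_add (X ω)
    have t2 : Tendsto (fun n : ℕ => Real.exp (-a₁ * (1 / ((n : ℝ) + 1)))) atTop (nhds 1) := by
      have := (Real.continuous_exp.tendsto (-a₁ * 0)).comp (hlim.const_mul (-a₁))
      simpa [Function.comp_def] using this
    have t3 := (hc.tendsto.comp t1).add
      ((t2.const_mul μ).mul_const (-hprime P m a₀ a₁ X ω))
    have := le_of_tendsto' t3 hω
    linarith

theorem laplace_congr (P : Measure Ω) {X Y : Ω → ℝ} (h : X =ᵐ[P] Y) (a : ℝ) :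
    ∫ ω, Real.exp (-a * X ω) ∂P = ∫ ω, Real.exp (-a * Y ω) ∂P :=
  integral_congr_ae (by filter_upwards [h] with ω hω; rw [hω])

theorem fullObj_congr (P : Measure Ω) (m : Measure ℝ) (a₀ a₁ : ℝ) (ρ : Ω → ℝ) (U : ℝ → ℝ)
    (μ lam : ℝ) {X Y : Ω → ℝ} (h : X =ᵐ[P] Y) :
    fullObj P m a₀ a₁ ρ U μ lam X = fullObj P m a₀ a₁ ρ U μ lam Y := by
  have h1 : eutil P U X = eutil P U Y := by
    unfold eutil eint
    congr 2 <;> exact lintegral_congr_ae (by filter_upwards [h] with ω hω; rw [hω])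
  have h2 : werm P m a₀ a₁ X = werm P m a₀ a₁ Y := by
    unfold werm entropic
    simp_rw [laplace_congr P h]
  have h3 : budget P ρ X = budget P ρ Y :=
    lintegral_congr_ae (by filter_upwards [h] with ω hω; rw [hω])
  unfold fullObj
  rw [h1, h2, h3]

/-- a maximizer of `E[U(X)] - μ h(X) - λ E[ρX]` over `L⁰₊` (with finite
supremum) satisfies `U′(X*) - λρ - μ h′(X*) ≤ 0` a.s. -/
theorem eu_lagrangian_foc_le (P : Measure Ω) [IsProbabilityMeasure P]
    (a₀ a₁ : ℝ) (ha₀ : 0 < a₀) (ha₀₁ : a₀ < a₁)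
    (m : Measure ℝ) [IsProbabilityMeasure m] (hm : m (Set.Icc a₀ a₁) = 1)
    (ρ : Ω → ℝ) (hmρ : Measurable ρ) (hρ0 : ∀ᵐ ω ∂P, 0 < ρ ω) (hρint : Integrable ρ P)
    (U U' : ℝ → ℝ)
    (hUc : ContinuousOn U (Set.Ici 0))
    (hUd : ∀ y : ℝ, 0 < y → HasDerivAt U (U' y) y)
    (hU'c : ContinuousOn U' (Set.Ioi 0))
    (hUmono : StrictMonoOn U (Set.Ioi 0))
    (hUconc : StrictConcaveOn ℝ (Set.Ioi 0) U)
    (hInada0 : Tendsto U' (nhdsWithin 0 (Set.Ioi 0)) atTop)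
    (hInadaInf : Tendsto U' atTop (nhds 0))
    (μ lam : ℝ) (hμ : 0 < μ) (hlam : 0 < lam)
    (hfin : ∃ r : ℝ, sSup (fullObj P m a₀ a₁ ρ U μ lam '' {X | Lpos P X}) = (r : EReal))
    (X : Ω → ℝ) (hX : Lpos P X)
    (hXmax : ∀ Y, Lpos P Y →
      fullObj P m a₀ a₁ ρ U μ lam Y ≤ fullObj P m a₀ a₁ ρ U μ lam X) :
    ∀ᵐ ω ∂P, U' (X ω) - lam * ρ ω - μ * hprime P m a₀ a₁ X ω ≤ 0 := by
  obtain ⟨r, hr⟩ := hfin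
  have hXr : fullObj P m a₀ a₁ ρ U μ lam X = (r : EReal) := by
    rw [← hr]
    refine le_antisymm (le_sSup ⟨X, hX, rfl⟩) (sSup_le ?_)
    rintro _ ⟨Y, hY, rfl⟩
    exact hXmax Y hY
  have hZ : X =ᵐ[P] fun ω => max (X ω) 0 := by
    filter_upwards [hX.2] with ω h
    exact (max_eq_left h).symm
  have hobj := fullObj_congr P m a₀ a₁ ρ U μ lam hZ
  have key := foc_of_nonneg P ha₀ m hmρ hρ0 hρint hUc hUd hU'c (marginal_antitone hUd hUconc)
    hInada0 hInadaInf hμ hlam (hX.1.max measurable_const) (fun ω => le_max_right (X ω) 0)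
    (hobj ▸ hXr) (hobj ▸ hXmax)
  filter_upwards [key, hX.2] with ω h h0
  unfold hprime at h ⊢
  simp_rw [laplace_congr P hZ]
  simp only [max_eq_left h0] at h
  exact h
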